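/- Let (t : H →* G, α : G →* MulAut H) be a crossed module, with mapping-cone map d₂ and Peiffer lifting {·,·} as specified. Then the action of the middle group H ⋊[α] G on H defined via the Peiffer lifting agrees with the action through the G-component: for all l ∈ H and all ⟨h, g⟩ ∈ H ⋊[α] G, l * {d₂ (l⁻¹), ⟨h, g⟩} = α g l. -/

import Mathlib

section MappingCone

variable {G H : Type*} [Group G] [Group H] {α : G →* MulAut H}

/-- The Peiffer lifting `{x, y}` on the middle group `H ⋊[α] G` of the mapping cone of the
identity on a crossed module, in terms of the components of `x` and `y`. -/
def peifferLifting (x y : H ⋊[α] G) : H :=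
  α (x.right * y.right * x.right⁻¹) x.left * x.left⁻¹

/-- The top differential `d₂ : H → H ⋊[α] G` of the mapping cone of the identity on a crossed
module with boundary map `t`, encoded as a plain function. -/
def mappingConeD₂ (t : H → G) (h : H) : H ⋊[α] G :=
  ⟨h⁻¹, t h⟩

theorem map_conj_apply_inv_of_map_eq_conj {k : G} {h : H} (hk : α k = MulAut.conj h) (g : G) :
    α (k * g * k⁻¹) h⁻¹ = h * α g h⁻¹ * h⁻¹ := by
  have fixes_inv : α k⁻¹ h⁻¹ = h⁻¹ := by
    rw [map_inv α, hk, MulAut.conj_inv_apply, inv_mul_cancel_right]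
  calc
    α (k * g * k⁻¹) h⁻¹ = α k (α g (α k⁻¹ h⁻¹)) := by
      simp only [map_mul, MulAut.mul_apply]
    _ = h * α g h⁻¹ * h⁻¹ := by rw [fixes_inv, hk, MulAut.conj_apply]

theorem peifferLifting_mappingConeD₂ {t : H → G} {h : H} (ht : α (t h) = MulAut.conj h)
    (x : H ⋊[α] G) :
    peifferLifting (mappingConeD₂ t h) x = h * α x.right h⁻¹ := by
  simp only [peifferLifting, mappingConeD₂, map_conj_apply_inv_of_map_eq_conj ht,
    inv_mul_cancel_right, inv_inv]

theorem mappingCone_middle_action_agrees_general {t : H → G}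
    (peiffer : ∀ h : H, α (t h) = MulAut.conj h) (l : H) (x : H ⋊[α] G) :
    l * peifferLifting (mappingConeD₂ t l⁻¹) x = α x.right l := by
  rw [peifferLifting_mappingConeD₂ (peiffer l⁻¹), inv_inv, mul_inv_cancel_left]

end MappingCone

/-- For the mapping cone of the identity on a crossed module, the action of the middle
group `H ⋊[α] G` on `H` defined via the Peiffer lifting agrees with the action through
the `G`-component: `l * {d₂ (l⁻¹), ⟨h, g⟩} = α g l`. -/
theorem mappingCone_middle_action_agrees {G H : Type*} [Group G] [Group H]
    (t : H →* G) (α : G →* MulAut H)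
    (hcm1 : ∀ (g : G) (h : H), t (α g h) = g * t h * g⁻¹)
    (hcm2 : ∀ h h' : H, α (t h) h' = h * h' * h⁻¹)
    (d₂ : H →* H ⋊[α] G) (hd₂ : ∀ h : H, d₂ h = ⟨h⁻¹, t h⟩)
    (P : H ⋊[α] G → H ⋊[α] G → H)
    (hP : ∀ (h₁ : H) (g₁ : G) (h₂ : H) (g₂ : G),
      P ⟨h₁, g₁⟩ ⟨h₂, g₂⟩ = α (g₁ * g₂ * g₁⁻¹) h₁ * h₁⁻¹) :
    ∀ (l h : H) (g : G), l * P (d₂ l⁻¹) ⟨h, g⟩ = α g l := by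
  intro l h g
  rw [hd₂, hP]
  exact mappingCone_middle_action_agrees_general (fun k ↦ MulEquiv.ext (hcm2 k)) l ⟨h, g⟩
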